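/- The function f(x) = 2p(1 − x·p_s)/(3p + x·p_s·(1 − 3p)) is strictly decreasing on [0,1]; consequently, for every p_α ∈ [0,1), f(p_α) > f(1), i.e. the randomized stationary policy with sampling probability p_α < 1 has strictly higher time-averaged reconstruction error than the semantics-aware policy. (This is the first claim of the paper's Remark 1.) -/

import Mathlib

/-- First claim of Remark 1 of the paper: for the three-state symmetric DTMC source, the
time-averaged reconstruction error under the randomized stationary policy is strictly
decreasing in the sampling probability, so any sampling probability p_α < 1 yields
strictly higher error than the semantics-aware policy (which attains f(1)). -/
theorem stmt_11 (p ps : ℝ) (hp : 0 < p) (hp' : p ≤ 1 / 2) (hps : 0 < ps) (hps' : ps ≤ 1)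
    (f : ℝ → ℝ)
    (hf : ∀ x, f x = 2 * p * (1 - x * ps) / (3 * p + x * ps * (1 - 3 * p))) :
    StrictAntiOn f (Set.Icc 0 1) ∧ ∀ pa ∈ Set.Ico (0 : ℝ) 1, f 1 < f pa := by
  have hden : ∀ x ∈ Set.Icc (0 : ℝ) 1, 0 < 3 * p + x * ps * (1 - 3 * p) := by
    rintro x ⟨h0, h1⟩
    have hu0 : 0 ≤ x * ps := mul_nonneg h0 hps.le
    have hu1 : x * ps ≤ 1 := mul_le_one₀ h1 hps.le hps'
    rcases hu0.eq_or_lt with h | h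
    · rw [← h]; linarith
    · have := mul_nonneg hp.le (sub_nonneg.2 hu1)
      nlinarith
  have hanti : StrictAntiOn f (Set.Icc 0 1) := by
    intro x hx y hy hxy
    rw [hf x, hf y, div_lt_div_iff₀ (hden y hy) (hden x hx)]
    have := mul_pos hp (mul_pos hps (sub_pos.2 hxy))
    linarith
  refine ⟨hanti, fun a ha => hanti ⟨ha.1, ha.2.le⟩ ⟨zero_le_one, le_rfl⟩ ha.2⟩
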